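/- Suppose r = r_A (exact-parametrization), rank(X_0) = r, and 0 < η ≤ 1. Then for every t ≥ 0 the modified ScaledGD iterates satisfy X_t = U Φ_t and Y_t = V Ψ_t for some Φ_t, Ψ_t ∈ R^{r×r}; equivalently, (I_m − UUᵀ) X_t = 0 and (I_n − VVᵀ) Y_t = 0 for all t. Moreover, for all t ≥ 1 both Φ_t and Ψ_t are invertible, so the iteration is well defined. -/

import Mathlib

open Matrix BigOperators

/-!
Let `A = U * S * Vᵀ` with `S` square. Full rank of `X 0 = U * P`, where `P = S * Vᵀ * Ω`, makes
`P` and `S` invertible, so `A` factors through the initialization as `A = X 0 * Cᵀ` with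
`C = V * (P⁻¹ * S)ᵀ`. A step replaces `X` by `(1 - η) X + η Z`, where `Z` solves the least-squares
problem `Z Yᵀ ≈ A`; at `Y = c C` that solution is `c⁻¹ X 0`. Hence `X t = a X 0` and `Y t = c C`
for scalars `a` and `c` depending on `t`; for `η ≤ 1`, `a` and `η c` are positive from `t = 1` on.
-/

section GramMatrices

variable {R m r : Type*} [Fintype m] [Fintype r] [DecidableEq r]

theorem transpose_mul_self_mul_of_orthonormal {k : Type*} [CommSemiring R]
    {U : Matrix m r R} (hU : Uᵀ * U = 1) (P : Matrix r k R) : (U * P)ᵀ * (U * P) = Pᵀ * P := by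
  rw [transpose_mul, Matrix.mul_assoc, ← Matrix.mul_assoc Uᵀ, hU, Matrix.one_mul]

theorem isUnit_transpose_mul_self_mul_of_orthonormal [CommRing R] {U : Matrix m r R}
    (hU : Uᵀ * U = 1) {P : Matrix r r R} (hP : IsUnit P) : IsUnit ((U * P)ᵀ * (U * P)) := by
  rw [transpose_mul_self_mul_of_orthonormal hU]
  exact ((isUnit_transpose P).2 hP).mul hP

theorem one_sub_mul_transpose_mul_mul_eq_zero {k : Type*} [Ring R] [DecidableEq m]
    {U : Matrix m r R} (hU : Uᵀ * U = 1) (P : Matrix r k R) : (1 - U * Uᵀ) * (U * P) = 0 := by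
  rw [Matrix.sub_mul, Matrix.one_mul, Matrix.mul_assoc, ← Matrix.mul_assoc Uᵀ, hU,
    Matrix.one_mul, sub_self]

end GramMatrices

theorem isUnit_of_rank_eq_card {K r : Type*} [Field K] [Fintype r] [DecidableEq r]
    {P : Matrix r r K} (hP : P.rank = Fintype.card r) : IsUnit P := by
  rw [← linearIndependent_cols_iff_isUnit, linearIndependent_iff_card_eq_finrank_span,
    Set.finrank, ← rank_eq_finrank_span_cols, hP]

theorem isUnit_of_rank_mul_eq_card {K m r : Type*} [Field K] [Fintype r] [DecidableEq r]
    {U : Matrix m r K} {P : Matrix r r K} (h : (U * P).rank = Fintype.card r) : IsUnit P :=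
  isUnit_of_rank_eq_card <| (rank_le_card_width P).antisymm <| h ▸ rank_mul_le_right U P

section Step

variable {K m n r : Type*} [Field K] [Fintype n] [Fintype r] [DecidableEq r]

/-- One ScaledGD update of the factor `X` for the approximation `X * Yᵀ ≈ A`. The update of `Y` is
the same one with `A` transposed and the factors exchanged. -/
noncomputable def scaledGDStep (η : K) (A : Matrix m n K) (X : Matrix m r K) (Y : Matrix n r K) :
    Matrix m r K :=
  X - η • ((X * Yᵀ - A) * Y * (Yᵀ * Y)⁻¹)

theorem scaledGDStep_eq_smul_add_smul (η : K) (A : Matrix m n K) (X : Matrix m r K)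
    {Y : Matrix n r K} (hY : IsUnit (Yᵀ * Y)) :
    scaledGDStep η A X Y = (1 - η) • X + η • (A * Y * (Yᵀ * Y)⁻¹) := by
  have hX : X * Yᵀ * Y * (Yᵀ * Y)⁻¹ = X := by
    rw [Matrix.mul_assoc X, mul_nonsing_inv_cancel_right _ _ ((isUnit_iff_isUnit_det _).1 hY)]
  rw [scaledGDStep, Matrix.sub_mul, Matrix.sub_mul, hX]
  module

theorem mul_transpose_mul_smul_mul_inv (B : Matrix m r K) {C : Matrix n r K}
    (hC : IsUnit (Cᵀ * C)) {c : K} (hc : c ≠ 0) :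
    B * Cᵀ * (c • C) * ((c • C)ᵀ * (c • C))⁻¹ = c⁻¹ • B := by
  have hdet := (isUnit_iff_isUnit_det _).1 hC
  have hinv : ((c • C)ᵀ * (c • C))⁻¹ = (c⁻¹ * c⁻¹) • (Cᵀ * C)⁻¹ := by
    apply inv_eq_right_inv
    simp only [transpose_smul, Matrix.smul_mul, Matrix.mul_smul, smul_smul,
      mul_nonsing_inv _ hdet]
    rw [show c⁻¹ * c⁻¹ * (c * c) = 1 by field_simp, one_smul]
  rw [hinv, Matrix.mul_smul, Matrix.mul_smul, Matrix.smul_mul, smul_smul, Matrix.mul_assoc B,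
    mul_nonsing_inv_cancel_right _ _ hdet, mul_assoc, inv_mul_cancel₀ hc, mul_one]

theorem scaledGDStep_smul_smul (η a : K) (B : Matrix m r K) {C : Matrix n r K}
    (hC : IsUnit (Cᵀ * C)) {c : K} (hc : c ≠ 0) :
    scaledGDStep η (B * Cᵀ) (a • B) (c • C) = ((1 - η) * a + η / c) • B := by
  have hcC : IsUnit ((c • C)ᵀ * (c • C)) := by
    rw [transpose_smul, Matrix.smul_mul, Matrix.mul_smul]
    exact (hC.smul (Units.mk0 c hc)).smul (Units.mk0 c hc)
  rw [scaledGDStep_eq_smul_add_smul _ _ _ hcC, mul_transpose_mul_smul_mul_inv B hC hc,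
    smul_smul, smul_smul, ← add_smul, div_eq_mul_inv]

end Step

/-- `X` and `Y` are the iterates of the modified ScaledGD with step size `η` for the matrix `A`,
started from the Nyström sketch `A * Ω`. The left factor is kept fixed in the first step, where
`Y 0 = 0` has a singular Gram matrix. -/
structure IsNystromScaledGD {K m n r : Type*} [Field K] [Fintype m] [Fintype n] [Fintype r]
    [DecidableEq r] (η : K) (A : Matrix m n K) (Ω : Matrix n r K)
    (X : ℕ → Matrix m r K) (Y : ℕ → Matrix n r K) : Prop where
  left_zero : X 0 = A * Ω
  right_zero : Y 0 = 0
  left_one : X 1 = X 0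
  left_succ : ∀ t, 1 ≤ t → X (t + 1) = X t - η • ((X t * (Y t)ᵀ - A) * Y t * ((Y t)ᵀ * Y t)⁻¹)
  right_succ : ∀ t, Y (t + 1) = Y t - η • ((X t * (Y t)ᵀ - A)ᵀ * X t * ((X t)ᵀ * X t)⁻¹)

namespace IsNystromScaledGD

variable {K m n r : Type*} [Field K] [Fintype m] [Fintype n] [Fintype r] [DecidableEq r]
  {η : K} {A : Matrix m n K} {Ω : Matrix n r K} {X : ℕ → Matrix m r K} {Y : ℕ → Matrix n r K}

theorem right_succ_eq_scaledGDStep (h : IsNystromScaledGD η A Ω X Y) (t : ℕ) :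
    Y (t + 1) = scaledGDStep η Aᵀ (Y t) (X t) := by
  rw [h.right_succ, scaledGDStep, transpose_sub, transpose_mul, transpose_transpose]

theorem left_succ_eq_smul (h : IsNystromScaledGD η A Ω X Y) {B : Matrix m r K}
    {C : Matrix n r K} (hA : A = B * Cᵀ) (hC : IsUnit (Cᵀ * C)) {t : ℕ} (ht : 1 ≤ t) {a c : K}
    (hc : c ≠ 0) (hX : X t = a • B) (hY : Y t = c • C) :
    X (t + 1) = ((1 - η) * a + η / c) • B := by
  rw [← scaledGDStep_smul_smul η a B hC hc, ← hA, ← hX, ← hY, h.left_succ t ht, scaledGDStep]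

theorem right_succ_eq_smul (h : IsNystromScaledGD η A Ω X Y) {B : Matrix m r K}
    {C : Matrix n r K} (hA : A = B * Cᵀ) (hB : IsUnit (Bᵀ * B)) {t : ℕ} {a c : K}
    (ha : a ≠ 0) (hX : X t = a • B) (hY : Y t = c • C) :
    Y (t + 1) = ((1 - η) * c + η / a) • C := by
  have hAT : Aᵀ = C * Bᵀ := by rw [hA, transpose_mul, transpose_transpose]
  rw [h.right_succ_eq_scaledGDStep, hAT, hX, hY, scaledGDStep_smul_smul η c C hB ha]

theorem exists_eq_smul [LinearOrder K] [IsStrictOrderedRing K]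
    (h : IsNystromScaledGD η A Ω X Y) (hη0 : η ≠ 0) (hη1 : η ≤ 1) {C : Matrix n r K}
    (hA : A = X 0 * Cᵀ) (hB : IsUnit ((X 0)ᵀ * X 0)) (hC : IsUnit (Cᵀ * C)) (t : ℕ) :
    ∃ a c : K, 0 < a ∧ 0 < η * c ∧ X (t + 1) = a • X 0 ∧ Y (t + 1) = c • C := by
  have hη : 0 < η * η := mul_self_pos.2 hη0
  have hη1' : 0 ≤ 1 - η := sub_nonneg.2 hη1
  induction t with
  | zero =>
    have hY : Y 1 = ((1 - η) * 0 + η / 1) • C :=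
      h.right_succ_eq_smul hA hB one_ne_zero (one_smul K _).symm (by rw [zero_smul, h.right_zero])
    exact ⟨1, η, one_pos, hη, by rw [h.left_one, one_smul], by simpa using hY⟩
  | succ t ih =>
    obtain ⟨a, c, ha, hηc, hX, hY⟩ := ih
    have hc : c ≠ 0 := right_ne_zero_of_mul hηc.ne'
    have ha' : (1 - η) * a + η / c = (1 - η) * a + η * η / (η * c) := by field_simp
    have hc' : η * ((1 - η) * c + η / a) = (1 - η) * (η * c) + η * η / a := by ring
    refine ⟨(1 - η) * a + η / c, (1 - η) * c + η / a, ?_, ?_,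
      h.left_succ_eq_smul hA hC t.succ_pos hc hX hY, h.right_succ_eq_smul hA hB ha.ne' hX hY⟩
    · rw [ha']
      exact add_pos_of_nonneg_of_pos (mul_nonneg hη1' ha.le) (div_pos hη hηc)
    · rw [hc']
      exact add_pos_of_nonneg_of_pos (mul_nonneg hη1' hηc.le) (div_pos hη ha)

theorem exists_isUnit_left_zero_eq_mul (h : IsNystromScaledGD η A Ω X Y) {U : Matrix m r K}
    {V : Matrix n r K} {S : Matrix r r K} (hA : A = U * S * Vᵀ)
    (hrank : (X 0).rank = Fintype.card r) :
    ∃ P Q : Matrix r r K, IsUnit P ∧ IsUnit Q ∧ X 0 = U * P ∧ A = X 0 * (V * Q)ᵀ := by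
  have hX : X 0 = U * (S * (Vᵀ * Ω)) := by simp only [h.left_zero, hA, Matrix.mul_assoc]
  have hP : IsUnit (S * (Vᵀ * Ω)) := isUnit_of_rank_mul_eq_card (hX ▸ hrank)
  have hS : IsUnit S := isUnit_of_mul_isUnit_left hP
  refine ⟨_, ((S * (Vᵀ * Ω))⁻¹ * S)ᵀ, hP,
    (isUnit_transpose _).2 ((isUnit_nonsing_inv_iff.2 hP).mul hS), hX, ?_⟩
  rw [hX, transpose_mul, transpose_transpose, Matrix.mul_assoc U,
    ← Matrix.mul_assoc (S * (Vᵀ * Ω)), mul_nonsing_inv_cancel_left _ _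
      ((isUnit_iff_isUnit_det _).1 hP), ← Matrix.mul_assoc, hA]

theorem exists_isUnit_eq_mul [LinearOrder K] [IsStrictOrderedRing K]
    (h : IsNystromScaledGD η A Ω X Y) (hη0 : η ≠ 0) (hη1 : η ≤ 1) {U : Matrix m r K}
    {V : Matrix n r K} {S : Matrix r r K} (hU : Uᵀ * U = 1) (hV : Vᵀ * V = 1)
    (hA : A = U * S * Vᵀ) (hrank : (X 0).rank = Fintype.card r) {t : ℕ} (ht : 1 ≤ t) :
    ∃ Φ Ψ : Matrix r r K, IsUnit Φ ∧ IsUnit Ψ ∧ X t = U * Φ ∧ Y t = V * Ψ := by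
  obtain ⟨P, Q, hP, hQ, hX0, hAPQ⟩ := h.exists_isUnit_left_zero_eq_mul hA hrank
  have hB : IsUnit ((X 0)ᵀ * X 0) := hX0 ▸ isUnit_transpose_mul_self_mul_of_orthonormal hU hP
  have hC := isUnit_transpose_mul_self_mul_of_orthonormal hV hQ
  obtain ⟨s, rfl⟩ := Nat.exists_eq_add_of_le' ht
  obtain ⟨a, c, ha, hηc, hX, hY⟩ := h.exists_eq_smul hη0 hη1 hAPQ hB hC s
  refine ⟨a • P, c • Q, hP.smul (Units.mk0 a ha.ne'),
    hQ.smul (Units.mk0 c (right_ne_zero_of_mul hηc.ne')), ?_, ?_⟩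
  · rw [hX, hX0, Matrix.mul_smul]
  · rw [hY, Matrix.mul_smul]

end IsNystromScaledGD

theorem stmt_10_general {K m n r : Type*} [Field K] [LinearOrder K] [IsStrictOrderedRing K]
    [Fintype m] [DecidableEq m] [Fintype n] [DecidableEq n] [Fintype r] [DecidableEq r]
    {A : Matrix m n K} {U : Matrix m r K} {V : Matrix n r K} {S : Matrix r r K}
    (hU : Uᵀ * U = 1) (hV : Vᵀ * V = 1) (hA : A = U * S * Vᵀ)
    {η : K} (hη0 : η ≠ 0) (hη1 : η ≤ 1)
    {Ω : Matrix n r K} {X : ℕ → Matrix m r K} {Y : ℕ → Matrix n r K}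
    (h : IsNystromScaledGD η A Ω X Y) (hrank : (X 0).rank = Fintype.card r) :
    (∀ t, ∃ Φ Ψ : Matrix r r K, X t = U * Φ ∧ Y t = V * Ψ) ∧
    (∀ t, (1 - U * Uᵀ) * X t = 0 ∧ (1 - V * Vᵀ) * Y t = 0) ∧
    (∀ t, 1 ≤ t → ∃ Φ Ψ : Matrix r r K, IsUnit Φ ∧ IsUnit Ψ ∧ X t = U * Φ ∧ Y t = V * Ψ) := by
  have hpos : ∀ t, 1 ≤ t → ∃ Φ Ψ : Matrix r r K,
      IsUnit Φ ∧ IsUnit Ψ ∧ X t = U * Φ ∧ Y t = V * Ψ :=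
    fun t ht => h.exists_isUnit_eq_mul hη0 hη1 hU hV hA hrank ht
  have hall : ∀ t, ∃ Φ Ψ : Matrix r r K, X t = U * Φ ∧ Y t = V * Ψ := by
    rintro (_ | t)
    · obtain ⟨Φ, -, -, -, hX, -⟩ := hpos 1 le_rfl
      exact ⟨Φ, 0, h.left_one ▸ hX, by rw [h.right_zero, Matrix.mul_zero]⟩
    · obtain ⟨Φ, Ψ, -, -, hXY⟩ := hpos (t + 1) t.succ_pos
      exact ⟨Φ, Ψ, hXY⟩
  refine ⟨hall, fun t => ?_, hpos⟩
  obtain ⟨Φ, Ψ, hX, hY⟩ := hall t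
  rw [hX, hY]
  exact ⟨one_sub_mul_transpose_mul_mul_eq_zero hU Φ, one_sub_mul_transpose_mul_mul_eq_zero hV Ψ⟩

/-- Directional alignment of the modified ScaledGD with Nyström initialization in the
asymmetric exact-parametrized setting: every iterate satisfies `X_t = UΦ_t`, `Y_t = VΨ_t`
(equivalently `(I − UUᵀ)X_t = 0`, `(I − VVᵀ)Y_t = 0`), and for `t ≥ 1` both `Φ_t` and
`Ψ_t` are invertible, so the iteration is well defined. -/
theorem stmt_10
    (m n r : ℕ) (hr : 0 < r)
    (A : Matrix (Fin m) (Fin n) ℝ)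
    (U : Matrix (Fin m) (Fin r) ℝ) (V : Matrix (Fin n) (Fin r) ℝ) (d : Fin r → ℝ)
    (hU : Uᵀ * U = 1) (hV : Vᵀ * V = 1)
    (hd : ∀ i, 0 < d i)
    (hdmono : ∀ i j : Fin r, i ≤ j → d j ≤ d i)
    (hA : A = U * Matrix.diagonal d * Vᵀ)
    (η : ℝ) (hη0 : 0 < η) (hη1 : η ≤ 1)
    (Ω : Matrix (Fin n) (Fin r) ℝ)
    (X : ℕ → Matrix (Fin m) (Fin r) ℝ) (Y : ℕ → Matrix (Fin n) (Fin r) ℝ)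
    (hX0 : X 0 = A * Ω)
    (hrank : (X 0).rank = r)
    (hY0 : Y 0 = 0)
    (hX1 : X 1 = X 0)
    (hXrec : ∀ t : ℕ, 1 ≤ t →
      X (t + 1) = X t - η • ((X t * (Y t)ᵀ - A) * Y t * ((Y t)ᵀ * Y t)⁻¹))
    (hYrec : ∀ t : ℕ,
      Y (t + 1) = Y t - η • ((X t * (Y t)ᵀ - A)ᵀ * X t * ((X t)ᵀ * X t)⁻¹)) :
    (∀ t : ℕ, ∃ (Φ Ψ : Matrix (Fin r) (Fin r) ℝ), X t = U * Φ ∧ Y t = V * Ψ) ∧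
    (∀ t : ℕ, (1 - U * Uᵀ) * X t = 0 ∧ (1 - V * Vᵀ) * Y t = 0) ∧
    (∀ t : ℕ, 1 ≤ t → ∃ (Φ Ψ : Matrix (Fin r) (Fin r) ℝ),
      IsUnit Φ ∧ IsUnit Ψ ∧ X t = U * Φ ∧ Y t = V * Ψ) := by
  exact stmt_10_general hU hV hA hη0.ne' hη1 ⟨hX0, hY0, hX1, hXrec, hYrec⟩
    (hrank.trans (Fintype.card_fin r).symm)
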